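/- Fix real numbers a < b and integers M ≥ 1; set h = (b−a)/M and grid points x_i = a + i·h for i = 0,…,M. Let φ : ℝ × ℝ × ℝⁿ × ℝ × ℝ → ℝⁿ satisfy ‖φ(t,x,y,τ,h) − φ(t,x,z,τ,h)‖_∞ ≤ L‖y − z‖_∞ for some L > 0 and all arguments, let τ > 0, t_k ∈ ℝ, and let d_i ∈ [a,b] for i = 0,…,M. If u_0,…,u_M and v_0,…,v_M are nodal values in ℝⁿ and one step of the semi-Lagrangian method is applied: u'_i = P[u](d_i) + τ·φ(t_k, d_i, P[u](d_i), τ, h) and v'_i = P[v](d_i) + τ·φ(t_k, d_i, P[v](d_i), τ, h), then for each i = 0,…,M, ‖u'_i − v'_i‖_∞ ≤ (1 + τL) · max_{0 ≤ j ≤ M} ‖u_j − v_j‖_∞. -/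

import Mathlib

/-- The piecewise linear interpolant of the nodal values `w 0, …, w M` on the
uniform grid `x i = a + i*h`: on `[x i, x (i+1)]` it equals
`w i + ((x - x i)/h) • (w (i+1) - w i)`. -/
noncomputable def plin (n : ℕ) (a h : ℝ) (M : ℕ) (w : ℕ → Fin n → ℝ) (x : ℝ) :
    Fin n → ℝ :=
  let i := min (M - 1) (Nat.floor ((x - a) / h))
  w i + ((x - (a + (i : ℝ) * h)) / h) • (w (i + 1) - w i)

/-!
The interpolant is linear in its nodal values, and on `[a, b]` its value is a convex combination
of two neighbouring ones. Applied to the differences `u j - v j`, which lie in the closed ball of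
radius `max_j ‖u j - v j‖`, this shows that interpolation does not increase distances; the
increment `τ • φ` then costs at most the factor `1 + τ * L`.
-/

section gridCell

variable {R : Type*} [Ring R] [LinearOrder R] [FloorSemiring R] {M : ℕ} {s : R}

/-- The index `i < M` of the cell `[i, i + 1]` containing the point `s` of `[0, M]`. A grid point
belongs to the cell on its right, except that `s = M` belongs to the last cell. -/
def gridCell (M : ℕ) (s : R) : ℕ := min (M - 1) ⌊s⌋₊

lemma gridCell_lt (hM : 0 < M) : gridCell M s < M :=
  (min_le_left _ _).trans_lt (Nat.sub_one_lt_of_lt hM)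

lemma sub_gridCell_mem_Icc [IsStrictOrderedRing R] (hs : s ∈ Set.Icc (0 : R) M) :
    s - gridCell M s ∈ Set.Icc (0 : R) 1 := by
  have floor_le : (⌊s⌋₊ : R) ≤ s := Nat.floor_le hs.1
  have le_last_cell : s ≤ (M - 1 : ℕ) + 1 := hs.2.trans (by exact_mod_cast le_tsub_add)
  rw [gridCell, Nat.cast_min, Set.mem_Icc, sub_nonneg, sub_le_iff_le_add',
    ← min_add_add_right]
  exact ⟨(min_le_right _ _).trans floor_le,
    le_min le_last_cell (Nat.lt_floor_add_one s).le⟩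

end gridCell

section plin

variable {n M : ℕ} {a h x : ℝ}

lemma plin_sub (u v : ℕ → Fin n → ℝ) :
    plin n a h M (u - v) x = plin n a h M u x - plin n a h M v x := by
  simp only [plin, Pi.sub_apply]
  module

lemma plin_eq_lineMap (hh : h ≠ 0) (w : ℕ → Fin n → ℝ) :
    plin n a h M w x =
      AffineMap.lineMap (w (gridCell M ((x - a) / h))) (w (gridCell M ((x - a) / h) + 1))
        ((x - a) / h - gridCell M ((x - a) / h)) := by
  have local_coord (i : ℝ) : (x - (a + i * h)) / h = (x - a) / h - i := by
    rw [← sub_sub, sub_div, mul_div_cancel_right₀ _ hh]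
  rw [AffineMap.lineMap_apply_module', add_comm, ← local_coord]
  rfl

lemma plin_mem_of_convex {s : Set (Fin n → ℝ)} (hs : Convex ℝ s) (hM : 0 < M) (hh : 0 < h)
    (hx : x ∈ Set.Icc a (a + M * h)) {w : ℕ → Fin n → ℝ} (hw : ∀ j ≤ M, w j ∈ s) :
    plin n a h M w x ∈ s := by
  have scaled_mem : (x - a) / h ∈ Set.Icc (0 : ℝ) M :=
    ⟨div_nonneg (sub_nonneg.2 hx.1) hh.le, (div_le_iff₀ hh).2 (sub_le_iff_le_add'.2 hx.2)⟩
  rw [plin_eq_lineMap hh.ne']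
  exact hs.lineMap_mem (hw _ (gridCell_lt hM).le) (hw _ (gridCell_lt hM))
    (sub_gridCell_mem_Icc scaled_mem)

lemma norm_plin_sub_plin_le (hM : 0 < M) (hh : 0 < h) (hx : x ∈ Set.Icc a (a + M * h))
    {u v : ℕ → Fin n → ℝ} {C : ℝ} (hC : ∀ j ≤ M, ‖u j - v j‖ ≤ C) :
    ‖plin n a h M u x - plin n a h M v x‖ ≤ C := by
  rw [← plin_sub, ← mem_closedBall_zero_iff]
  exact plin_mem_of_convex (convex_closedBall 0 C) hM hh hx fun j hj =>
    mem_closedBall_zero_iff.2 (hC j hj)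

end plin

lemma norm_add_smul_sub_add_smul_le {𝕜 E : Type*} [NormedField 𝕜] [SeminormedAddCommGroup E]
    [NormedSpace 𝕜 E] (c : 𝕜) {y z p q : E} {L : ℝ} (hpq : ‖p - q‖ ≤ L * ‖y - z‖) :
    ‖(y + c • p) - (z + c • q)‖ ≤ (1 + ‖c‖ * L) * ‖y - z‖ :=
  calc ‖(y + c • p) - (z + c • q)‖ = ‖(y - z) + c • (p - q)‖ := by
        rw [add_sub_add_comm, smul_sub]
    _ ≤ ‖y - z‖ + ‖c‖ * ‖p - q‖ := (norm_add_le _ _).trans_eq (by rw [norm_smul])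
    _ ≤ ‖y - z‖ + ‖c‖ * (L * ‖y - z‖) := by gcongr
    _ = (1 + ‖c‖ * L) * ‖y - z‖ := by ring

/-- Single-step contraction estimate from the stability proof of Theorem 3.5:
one step of the semi-Lagrangian method applied to two families of nodal values
(with the same departure points `d i ∈ [a,b]`) satisfies
`‖u'_i - v'_i‖_∞ ≤ (1 + τL) · max_j ‖u_j - v_j‖_∞`. -/
theorem stmt_9 (n M : ℕ) (hM : 1 ≤ M)
    (a b L : ℝ) (hab : a < b) (hL : 0 < L)
    (φ : ℝ → ℝ → (Fin n → ℝ) → ℝ → ℝ → (Fin n → ℝ))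
    (hφ : ∀ (t x : ℝ) (w w' : Fin n → ℝ) (τ' h' : ℝ),
      ‖φ t x w τ' h' - φ t x w' τ' h'‖ ≤ L * ‖w - w'‖)
    (τ : ℝ) (hτ : 0 < τ) (tk : ℝ)
    (d : ℕ → ℝ) (hd : ∀ i, i ≤ M → d i ∈ Set.Icc a b)
    (u v u' v' : ℕ → Fin n → ℝ)
    (hu' : ∀ i, i ≤ M → u' i =
      plin n a ((b - a) / M) M u (d i)
        + τ • φ tk (d i) (plin n a ((b - a) / M) M u (d i)) τ ((b - a) / M))
    (hv' : ∀ i, i ≤ M → v' i =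
      plin n a ((b - a) / M) M v (d i)
        + τ • φ tk (d i) (plin n a ((b - a) / M) M v (d i)) τ ((b - a) / M)) :
    ∀ i, i ≤ M →
      ‖u' i - v' i‖ ≤ (1 + τ * L) *
        (Finset.range (M + 1)).sup' Finset.nonempty_range_add_one
          (fun j => ‖u j - v j‖) := by
  intro i hi
  set C := (Finset.range (M + 1)).sup' Finset.nonempty_range_add_one (fun j => ‖u j - v j‖)
  have nodal_le : ∀ j ≤ M, ‖u j - v j‖ ≤ C := fun j hj =>
    Finset.le_sup' (fun j => ‖u j - v j‖) (Finset.mem_range_succ_iff.2 hj)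
  have hM' : (0 : ℝ) < M := by exact_mod_cast hM
  have step_pos : 0 < (b - a) / M := div_pos (sub_pos.2 hab) hM'
  have departure_mem : d i ∈ Set.Icc a (a + M * ((b - a) / M)) := by
    rw [mul_div_cancel₀ _ hM'.ne', add_sub_cancel]
    exact hd i hi
  have interp_le := norm_plin_sub_plin_le hM step_pos departure_mem nodal_le
  have step_le := norm_add_smul_sub_add_smul_le τ (hφ tk (d i)
    (plin n a ((b - a) / M) M u (d i)) (plin n a ((b - a) / M) M v (d i)) τ ((b - a) / M))
  rw [Real.norm_of_nonneg hτ.le, ← hu' i hi, ← hv' i hi] at step_le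
  exact step_le.trans (by gcongr)
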